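/- arXiv:1907.02219 — 2 statements merged into one kernel-verified Lean document; each statement's English description precedes it below -/
import Mathlib

section
/- The set Ω_f is dense in the nonnegative orthant of ℝ^{N_G}: every vector f ∈ ℝ^{N_G} with f ≥ 0 componentwise lies in the closure of Ω_f. -/
open Matrix

noncomputable section

/-- Parameter tuple ξ = (s̄, s̲, p̄, p̲). -/
abbrev XiT (NG E : ℕ) : Type := (Fin NG → ℝ) × (Fin NG → ℝ) × (Fin E → ℝ) × (Fin E → ℝ)

/-- Each column of `C` has exactly one `+1`, one `-1`, and zeros elsewhere. -/
def IsIncidence {NG NL E : ℕ} (C : Matrix (Fin (NG + NL)) (Fin E) ℝ) : Prop :=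
  ∀ e : Fin E, ∃ u v : Fin (NG + NL), u ≠ v ∧ C u e = 1 ∧ C v e = -1 ∧
    ∀ w : Fin (NG + NL), w ≠ u → w ≠ v → C w e = 0

/-- Connectedness: the kernel of `Cᵀ` consists exactly of the constant vectors. -/
def ConnectedIncidence {NG NL E : ℕ} (C : Matrix (Fin (NG + NL)) (Fin E) ℝ) : Prop :=
  ∀ x : Fin (NG + NL) → ℝ, Cᵀ *ᵥ x = 0 ↔ ∃ c : ℝ, x = fun _ => c

/-- `B` is diagonal with strictly positive diagonal entries. -/
def PosDiag {E : ℕ} (B : Matrix (Fin E) (Fin E) ℝ) : Prop :=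
  (∀ e, 0 < B e e) ∧ ∀ e e' : Fin E, e ≠ e' → B e e' = 0

/-- Feasibility of `(s^g, θ)` for the DC-OPF with limits `ξ` and loads `sl`. -/
def Feasible {NG NL E : ℕ} (C : Matrix (Fin (NG + NL)) (Fin E) ℝ)
    (B : Matrix (Fin E) (Fin E) ℝ) (ξ : XiT NG E) (sl : Fin NL → ℝ)
    (sg : Fin NG → ℝ) (θ : Fin (NG + NL) → ℝ) : Prop :=
  (∀ h : 0 < NG + NL, θ ⟨0, h⟩ = 0) ∧
  (C * B * Cᵀ) *ᵥ θ = Fin.append sg (fun j => -(sl j)) ∧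
  (∀ i, ξ.2.1 i ≤ sg i ∧ sg i ≤ ξ.1 i) ∧
  (∀ e, ξ.2.2.2 e ≤ ((B * Cᵀ) *ᵥ θ) e ∧ ((B * Cᵀ) *ᵥ θ) e ≤ ξ.2.2.1 e)

/-- The set Ω_ξ of admissible system limits. -/
def OmegaXi {NG NL E : ℕ} (C : Matrix (Fin (NG + NL)) (Fin E) ℝ)
    (B : Matrix (Fin E) (Fin E) ℝ) : Set (XiT NG E) :=
  { ξ | (∀ i, 0 ≤ ξ.2.1 i) ∧ (∀ i, ξ.2.1 i < ξ.1 i) ∧ (∀ e, ξ.2.2.2 e < ξ.2.2.1 e) ∧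
    ∃ sl : Fin NL → ℝ, (∀ j, 0 < sl j) ∧ ∃ sg θ, Feasible C B ξ sl sg θ }

/-- The set Ω_sl(ξ) of strictly positive feasible load profiles. -/
def OmegaSl {NG NL E : ℕ} (C : Matrix (Fin (NG + NL)) (Fin E) ℝ)
    (B : Matrix (Fin E) (Fin E) ℝ) (ξ : XiT NG E) : Set (Fin NL → ℝ) :=
  { sl | (∀ j, 0 < sl j) ∧ ∃ sg θ, Feasible C B ξ sl sg θ }

/-- `(sg, θ)` is an optimal solution of the DC-OPF. -/
def IsOptimal {NG NL E : ℕ} (C : Matrix (Fin (NG + NL)) (Fin E) ℝ)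
    (B : Matrix (Fin E) (Fin E) ℝ) (f : Fin NG → ℝ) (ξ : XiT NG E)
    (sl : Fin NL → ℝ) (sg : Fin NG → ℝ) (θ : Fin (NG + NL) → ℝ) : Prop :=
  Feasible C B ξ sl sg θ ∧
  ∀ sg' θ', Feasible C B ξ sl sg' θ' → f ⬝ᵥ sg ≤ f ⬝ᵥ sg'

/-- The matrix M: first N rows are C B Cᵀ, last row is e₁ᵀ. -/
def Mmat {NG NL E : ℕ} (C : Matrix (Fin (NG + NL)) (Fin E) ℝ)
    (B : Matrix (Fin E) (Fin E) ℝ) : Matrix (Fin (NG + NL + 1)) (Fin (NG + NL)) ℝ :=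
  Matrix.of fun i j => if h : (i : ℕ) < NG + NL then (C * B * Cᵀ) ⟨(i : ℕ), h⟩ j
    else if (j : ℕ) = 0 then 1 else 0

/-- KKT point for the DC-OPF. -/
def IsKKT {NG NL E : ℕ} (C : Matrix (Fin (NG + NL)) (Fin E) ℝ)
    (B : Matrix (Fin E) (Fin E) ℝ) (f : Fin NG → ℝ) (ξ : XiT NG E)
    (sl : Fin NL → ℝ) (sg : Fin NG → ℝ) (θ : Fin (NG + NL) → ℝ)
    (τ : Fin (NG + NL + 1) → ℝ) (μp μm : Fin E → ℝ) (lp lm : Fin NG → ℝ) : Prop :=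
  Feasible C B ξ sl sg θ ∧
  (Mmat C B)ᵀ *ᵥ τ + (C * B) *ᵥ (μp - μm) = 0 ∧
  (∀ i : Fin NG, -f i = -τ (Fin.castLE (by omega) i) + lp i - lm i) ∧
  (∀ e, 0 ≤ μp e) ∧ (∀ e, 0 ≤ μm e) ∧ (∀ i, 0 ≤ lp i) ∧ (∀ i, 0 ≤ lm i) ∧
  μp ⬝ᵥ (((B * Cᵀ) *ᵥ θ) - ξ.2.2.1) = 0 ∧
  μm ⬝ᵥ (ξ.2.2.2 - ((B * Cᵀ) *ᵥ θ)) = 0 ∧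
  lp ⬝ᵥ (sg - ξ.1) = 0 ∧
  lm ⬝ᵥ (ξ.2.1 - sg) = 0

/-- ℓ₀ "norm": number of nonzero entries. -/
def nnz {n : ℕ} (v : Fin n → ℝ) : ℕ := Set.ncard { i | v i ≠ 0 }

/-- The set Ω_f of well-behaved cost vectors. -/
def OmegaF {NG NL E : ℕ} (C : Matrix (Fin (NG + NL)) (Fin E) ℝ)
    (B : Matrix (Fin E) (Fin E) ℝ) : Set (Fin NG → ℝ) :=
  { f | (∀ i, 0 ≤ f i) ∧
    ∀ ξ ∈ OmegaXi C B, ∀ sl ∈ OmegaSl C B ξ,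
      (∃! p : (Fin NG → ℝ) × (Fin (NG + NL) → ℝ), IsOptimal C B f ξ sl p.1 p.2) ∧
      ∀ sg θ τ μp μm lp lm, IsKKT C B f ξ sl sg θ τ μp μm lp lm →
        NG - 1 ≤ nnz μp + nnz μm + nnz lp + nnz lm }

/-- Number of binding inequality constraints at `(sg, θ)` (among the 2N_G + 2E). -/
def bindingCount {NG NL E : ℕ} (C : Matrix (Fin (NG + NL)) (Fin E) ℝ)
    (B : Matrix (Fin E) (Fin E) ℝ) (ξ : XiT NG E) (sg : Fin NG → ℝ)
    (θ : Fin (NG + NL) → ℝ) : ℕ :=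
  Set.ncard { i : Fin NG | sg i = ξ.1 i } + Set.ncard { i : Fin NG | sg i = ξ.2.1 i } +
  Set.ncard { e : Fin E | ((B * Cᵀ) *ᵥ θ) e = ξ.2.2.1 e } +
  Set.ncard { e : Fin E | ((B * Cᵀ) *ᵥ θ) e = ξ.2.2.2 e }

/-- ~Ω_sl(ξ, f): loads with exactly N_G − 1 binding constraints at the optimum. -/
def TOmegaSl {NG NL E : ℕ} (C : Matrix (Fin (NG + NL)) (Fin E) ℝ)
    (B : Matrix (Fin E) (Fin E) ℝ) (f : Fin NG → ℝ) (ξ : XiT NG E) :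
    Set (Fin NL → ℝ) :=
  { sl | sl ∈ OmegaSl C B ξ ∧
    ∀ sg θ, IsOptimal C B f ξ sl sg θ → bindingCount C B ξ sg θ = NG - 1 }

/-- Indices of binding inequality constraints:
`inl i` = upper generation, `inr (inl i)` = lower generation,
`inr (inr (inl e))` = upper flow, `inr (inr (inr e))` = lower flow. -/
def BindingIdx {NG NL E : ℕ} (C : Matrix (Fin (NG + NL)) (Fin E) ℝ)
    (B : Matrix (Fin E) (Fin E) ℝ) (ξ : XiT NG E) (sg : Fin NG → ℝ)
    (θ : Fin (NG + NL) → ℝ) : Set (Fin NG ⊕ Fin NG ⊕ Fin E ⊕ Fin E) :=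
  { c | match c with
    | Sum.inl i => sg i = ξ.1 i
    | Sum.inr (Sum.inl i) => sg i = ξ.2.1 i
    | Sum.inr (Sum.inr (Sum.inl e)) => ((B * Cᵀ) *ᵥ θ) e = ξ.2.2.1 e
    | Sum.inr (Sum.inr (Sum.inr e)) => ((B * Cᵀ) *ᵥ θ) e = ξ.2.2.2 e }

/-- Gradients of the N + 1 equality constraints, as vectors in ℝ^{N_G} × ℝ^{N}. -/
def eqGrad {NG NL E : ℕ} (C : Matrix (Fin (NG + NL)) (Fin E) ℝ)
    (B : Matrix (Fin E) (Fin E) ℝ) :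
    (Unit ⊕ Fin (NG + NL)) → (Fin NG → ℝ) × (Fin (NG + NL) → ℝ)
  | Sum.inl _ => (0, fun j => if (j : ℕ) = 0 then 1 else 0)
  | Sum.inr i => ((fun k : Fin NG => if (k : ℕ) = (i : ℕ) then -1 else 0),
      fun j => (C * B * Cᵀ) i j)

/-- Gradients of the inequality constraints. -/
def ineqGrad {NG NL E : ℕ} (C : Matrix (Fin (NG + NL)) (Fin E) ℝ)
    (B : Matrix (Fin E) (Fin E) ℝ) :
    (Fin NG ⊕ Fin NG ⊕ Fin E ⊕ Fin E) → (Fin NG → ℝ) × (Fin (NG + NL) → ℝ)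
  | Sum.inl i => (Pi.single i 1, 0)
  | Sum.inr (Sum.inl i) => (-Pi.single i 1, 0)
  | Sum.inr (Sum.inr (Sum.inl e)) => (0, fun j => (B * Cᵀ) e j)
  | Sum.inr (Sum.inr (Sum.inr e)) => (0, fun j => -(B * Cᵀ) e j)

/-- The family of gradients of all equality constraints together with the binding
inequality constraints at `(sg, θ)`. -/
def fullGrad {NG NL E : ℕ} (C : Matrix (Fin (NG + NL)) (Fin E) ℝ)
    (B : Matrix (Fin E) (Fin E) ℝ) (ξ : XiT NG E) (sg : Fin NG → ℝ)
    (θ : Fin (NG + NL) → ℝ) :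
    ((Unit ⊕ Fin (NG + NL)) ⊕ ↥(BindingIdx C B ξ sg θ)) →
      (Fin NG → ℝ) × (Fin (NG + NL) → ℝ) :=
  fun i => match i with
    | Sum.inl j => eqGrad C B j
    | Sum.inr c => ineqGrad C B c.1

/-- S_G ⊥ S_B : the equality-constraint gradients together with the gradients
`(e_i, 0)`, `i ∈ S_G`, and `(0, row e of B Cᵀ)`, `e ∈ S_B`, are linearly independent. -/
def Perp {NG NL E : ℕ} (C : Matrix (Fin (NG + NL)) (Fin E) ℝ)
    (B : Matrix (Fin E) (Fin E) ℝ) (SG : Finset (Fin NG)) (SB : Finset (Fin E)) : Prop :=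
  LinearIndependent ℝ (fun i : (Unit ⊕ Fin (NG + NL)) ⊕ (↥SG ⊕ ↥SB) =>
    match i with
    | Sum.inl j => eqGrad C B j
    | Sum.inr (Sum.inl g) => ((Pi.single (g : Fin NG) 1 : Fin NG → ℝ), (0 : Fin (NG + NL) → ℝ))
    | Sum.inr (Sum.inr e) => ((0 : Fin NG → ℝ), fun j => (B * Cᵀ) (e : Fin E) j))

/-- The OPF operator: the generation part of the (unique) optimal solution. -/
def OPFmap {NG NL E : ℕ} (C : Matrix (Fin (NG + NL)) (Fin E) ℝ)
    (B : Matrix (Fin E) (Fin E) ℝ) (f : Fin NG → ℝ) (ξ : XiT NG E)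
    (sl : Fin NL → ℝ) : Fin NG → ℝ := by
  classical
  exact if h : ∃ p : (Fin NG → ℝ) × (Fin (NG + NL) → ℝ), IsOptimal C B f ξ sl p.1 p.2
    then h.choose.1 else 0

/-- The matrix R(S_G, S_B)ᵀ: rows N_G+1,…,N of C B Cᵀ; the rows of C B Cᵀ indexed
by S_G; the rows of B Cᵀ indexed by S_B; and e₁ᵀ. -/
def Rmat {NG NL E : ℕ} (C : Matrix (Fin (NG + NL)) (Fin E) ℝ)
    (B : Matrix (Fin E) (Fin E) ℝ) (SG : Finset (Fin NG)) (SB : Finset (Fin E)) :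
    Matrix ((Fin NL ⊕ (↥SG ⊕ ↥SB)) ⊕ Unit) (Fin (NG + NL)) ℝ :=
  Matrix.of fun i j => match i with
    | Sum.inl (Sum.inl k) => (C * B * Cᵀ) (Fin.natAdd NG k) j
    | Sum.inl (Sum.inr (Sum.inl g)) => (C * B * Cᵀ) (Fin.castAdd NL (g : Fin NG)) j
    | Sum.inl (Sum.inr (Sum.inr e)) => (B * Cᵀ) (e : Fin E) j
    | Sum.inr _ => if (j : ℕ) = 0 then 1 else 0

/-- The matrix Π applied to a load vector: embeds ℝ^{N_L} in the row-index space. -/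
def padSl {NG NL E : ℕ} (SG : Finset (Fin NG)) (SB : Finset (Fin E))
    (v : Fin NL → ℝ) : (Fin NL ⊕ (↥SG ⊕ ↥SB)) ⊕ Unit → ℝ
  | Sum.inl (Sum.inl k) => v k
  | _ => 0

/-- J(S_G, S_B) as a map: v ↦ −G (R(S_G,S_B)ᵀ)⁻¹ Π v, where G consists of the
first N_G rows of C B Cᵀ. -/
def JFun {NG NL E : ℕ} (C : Matrix (Fin (NG + NL)) (Fin E) ℝ)
    (B : Matrix (Fin E) (Fin E) ℝ) (SG : Finset (Fin NG)) (SB : Finset (Fin E))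
    (v : Fin NL → ℝ) : Fin NG → ℝ :=
  fun i =>
    -(((C * B * Cᵀ) *ᵥ (Function.invFun (Rmat C B SG SB).mulVec (padSl SG SB v)))
      (Fin.castAdd NL i))

/-- J(S_G, S_B) as an N_G × N_L matrix. -/
def Jmatrix {NG NL E : ℕ} (C : Matrix (Fin (NG + NL)) (Fin E) ℝ)
    (B : Matrix (Fin E) (Fin E) ℝ) (SG : Finset (Fin NG)) (SB : Finset (Fin E)) :
    Matrix (Fin NG) (Fin NL) ℝ :=
  Matrix.of fun i j => JFun C B SG SB (Pi.single j 1) i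

/-!
Eliminating the generation turns the DC-OPF into a linear program in the angles alone: `C B Cᵀ θ`
gives the injections, and the positive definite form `B` together with connectedness and the
reference angle makes `M` injective, so the feasible set is compact. Call a cost generic if, for
every set `S` of interval constraints, it is nonconstant on the space of directions that keep the
equality constraints and the constraints in `S` tight, unless that space is zero. At a minimizer
the cost vanishes on the directions tight for the active constraints, so for a generic cost no such
direction is left. The difference of two minimizers is tight at their midpoint, which is again a
minimizer; hence the minimizer is unique. At a KKT point the cost vanishes on the directions tight
for the constraints with nonzero multipliers, so again none is left; these constraints together with
the `N_L + 1` equality constraints then have rank `N`, and at least `N_G - 1` multipliers are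
nonzero. Nongeneric costs lie in a finite union of hyperplanes, one for each `S` with a nonzero
tight direction, and removing these leaves a dense subset of the orthant.
-/

open Filter Set Topology

theorem eventually_add_mul_mem_Icc {a b x d : ℝ} (hx : x ∈ Icc a b)
    (hd : x = a ∨ x = b → d = 0) : ∀ᶠ t in 𝓝 (0 : ℝ), x + t * d ∈ Icc a b := by
  by_cases hbd : x = a ∨ x = b
  · simp [hd hbd, hx]
  · push Not at hbd
    have htends : Tendsto (fun t : ℝ => x + t * d) (𝓝 0) (𝓝 x) :=
      (by fun_prop : Continuous fun t : ℝ => x + t * d).tendsto' 0 x (by simp)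
    exact htends (Icc_mem_nhds (hx.1.lt_of_ne' hbd.1) (hx.2.lt_of_ne hbd.2))

theorem subset_closure_inter_of_dense {X : Type*} [TopologicalSpace X] {s t : Set X}
    (hs : s ⊆ closure (interior s)) (ht : Dense t) : s ⊆ closure (s ∩ t) :=
  hs.trans <| closure_minimal ((ht.open_subset_closure_inter isOpen_interior).trans <|
    closure_mono <| inter_subset_inter_left t interior_subset) isClosed_closure

theorem Ici_zero_subset_closure_interior {n : Type*} [Finite n] :
    Ici (0 : n → ℝ) ⊆ closure (interior (Ici 0)) := by
  rw [← pi_univ_Ici, interior_pi_set finite_univ, closure_pi_set]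
  simp

theorem dense_forall_apply_ne_zero {E ι : Type*} [Countable ι] [AddCommGroup E]
    [TopologicalSpace E] [ContinuousAdd E] [Module ℝ E] [ContinuousSMul ℝ E] [BaireSpace E]
    {φ : ι → StrongDual ℝ E} (hφ : ∀ i, φ i ≠ 0) : Dense {v | ∀ i, φ i v ≠ 0} := by
  have hinter : {v | ∀ i, φ i v ≠ 0} = ⋂ i, φ i ⁻¹' {0}ᶜ := by ext; simp
  rw [hinter]
  exact dense_iInter_of_isOpen (fun i => isOpen_compl_singleton.preimage (φ i).continuous)
    fun i => (dense_compl_singleton 0).preimage ((φ i).isOpenMap_of_ne_zero (hφ i))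

theorem ncard_support_sumElim {α β M : Type*} [Finite α] [Finite β] [Zero M] (u : α → M)
    (v : β → M) : (Function.support (Sum.elim u v)).ncard =
      (Function.support u).ncard + (Function.support v).ncard := by
  have hsplit : Function.support (Sum.elim u v) =
      Sum.inl '' Function.support u ∪ Sum.inr '' Function.support v := by
    ext (a | b) <;> simp
  rw [hsplit, ncard_union_eq disjoint_image_inl_image_inr,
    ncard_image_of_injective _ Sum.inl_injective, ncard_image_of_injective _ Sum.inr_injective]

namespace LinearProgram

variable {V ε κ : Type*} [AddCommGroup V] [Module ℝ V]

section Defs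

variable (L : V →ₗ[ℝ] ε → ℝ) (A : V →ₗ[ℝ] κ → ℝ)

/-- The feasible set of the linear program with equality constraints `L x = r` and interval
constraints `lo ≤ A x ≤ hi`. -/
def polyhedron (r : ε → ℝ) (lo hi : κ → ℝ) : Set V := {x | L x = r ∧ A x ∈ Icc lo hi}

/-- The indices of the interval constraints `lo ≤ A x ≤ hi` that are binding at `x`. -/
def activeSet (lo hi : κ → ℝ) (x : V) : Set κ := {k | A x k = lo k ∨ A x k = hi k}

/-- The directions along which the equality constraints and the interval constraints indexed by
`S` keep their values. -/
def tightDirections (S : Set κ) : Submodule ℝ V :=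
  LinearMap.ker (L.prod (LinearMap.funLeft ℝ ℝ ((↑) : S → κ) ∘ₗ A))

/-- A cost `c` is generic if every set of interval constraints that leaves some direction free
leaves free a direction along which `c` varies. In terms of multipliers: `c` is a combination of
the equality functionals and the interval functionals in `S` only if these span the dual of `V`. -/
def IsGenericCost (c : V →ₗ[ℝ] ℝ) : Prop :=
  ∀ S : Set κ, tightDirections L A S ≤ LinearMap.ker c → tightDirections L A S = ⊥

end Defs

variable {L : V →ₗ[ℝ] ε → ℝ} {A : V →ₗ[ℝ] κ → ℝ} {r : ε → ℝ} {lo hi : κ → ℝ}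

theorem mem_tightDirections {S : Set κ} {d : V} :
    d ∈ tightDirections L A S ↔ L d = 0 ∧ ∀ k ∈ S, A d k = 0 := by
  simp [tightDirections, LinearMap.mem_ker, funext_iff, LinearMap.funLeft_apply]

theorem finrank_le_of_tightDirections_eq_bot [Fintype ε] [Finite κ] {S : Set κ}
    (hS : tightDirections L A S = ⊥) : Module.finrank ℝ V ≤ Fintype.card ε + S.ncard := by
  have := Fintype.ofFinite S
  calc Module.finrank ℝ V ≤ Module.finrank ℝ ((ε → ℝ) × (S → ℝ)) :=
        LinearMap.finrank_le_finrank_of_injective (LinearMap.ker_eq_bot.mp hS)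
    _ = Fintype.card ε + S.ncard := by
        rw [Module.finrank_prod, Module.finrank_fintype_fun_eq_card,
          Module.finrank_fintype_fun_eq_card, ← Nat.card_coe_set_eq, Nat.card_eq_fintype_card]

theorem convex_polyhedron : Convex ℝ (polyhedron L A r lo hi) :=
  ((convex_singleton r).linear_preimage L).inter ((convex_Icc lo hi).linear_preimage A)

theorem isCompact_polyhedron [TopologicalSpace V] [IsTopologicalAddGroup V] [ContinuousSMul ℝ V]
    [T2Space V] [FiniteDimensional ℝ V] (hLA : Function.Injective (L.prod A)) :
    IsCompact (polyhedron L A r lo hi) :=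
  (LinearMap.isClosedEmbedding_of_injective (LinearMap.ker_eq_bot.mpr hLA)).isCompact_preimage
    (isCompact_singleton.prod isCompact_Icc)

theorem eventually_add_smul_mem_polyhedron [Finite κ] {x d : V} (hx : x ∈ polyhedron L A r lo hi)
    (hd : d ∈ tightDirections L A (activeSet A lo hi x)) :
    ∀ᶠ t in 𝓝 (0 : ℝ), x + t • d ∈ polyhedron L A r lo hi := by
  obtain ⟨hLd, hAd⟩ := mem_tightDirections.mp hd
  have hbox : ∀ᶠ t in 𝓝 (0 : ℝ), ∀ k, A x k + t * A d k ∈ Icc (lo k) (hi k) :=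
    eventually_all.mpr fun k => eventually_add_mul_mem_Icc ⟨hx.2.1 k, hx.2.2 k⟩ (hAd k)
  filter_upwards [hbox] with t ht
  refine ⟨by simp [hLd, hx.1], fun k => ?_, fun k => ?_⟩
  · simpa using (ht k).1
  · simpa using (ht k).2

theorem tightDirections_activeSet_le_ker [Finite κ] {c : V →ₗ[ℝ] ℝ} {x : V}
    (hx : x ∈ polyhedron L A r lo hi) (hmin : IsMinOn c (polyhedron L A r lo hi) x) :
    tightDirections L A (activeSet A lo hi x) ≤ LinearMap.ker c := by
  intro d hd
  have hlocal : IsLocalMin (fun t : ℝ => c x + t * c d) 0 := by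
    filter_upwards [eventually_add_smul_mem_polyhedron hx hd] with t ht
    simpa using hmin ht
  have hderiv : HasDerivAt (fun t : ℝ => c x + t * c d) (c d) 0 := by
    simpa using ((hasDerivAt_id 0).mul_const (c d)).const_add (c x)
  exact hlocal.hasDerivAt_eq_zero hderiv

theorem sub_mem_tightDirections_activeSet_midpoint {x y : V} (hx : x ∈ polyhedron L A r lo hi)
    (hy : y ∈ polyhedron L A r lo hi) :
    x - y ∈ tightDirections L A (activeSet A lo hi (midpoint ℝ x y)) := by
  refine mem_tightDirections.mpr ⟨by simp [hx.1, hy.1], fun k hk => ?_⟩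
  have hmid : A (midpoint ℝ x y) k = (A x k + A y k) / 2 := by
    simp only [midpoint_eq_smul_add, map_smul, map_add, Pi.smul_apply, Pi.add_apply,
      invOf_eq_inv, smul_eq_mul]
    ring
  have hxk : A x k ∈ Icc (lo k) (hi k) := ⟨hx.2.1 k, hx.2.2 k⟩
  have hyk : A y k ∈ Icc (lo k) (hi k) := ⟨hy.2.1 k, hy.2.2 k⟩
  rw [map_sub, Pi.sub_apply]
  rcases hk with hk | hk <;> linarith [hxk.1, hxk.2, hyk.1, hyk.2]

theorem IsGenericCost.eq_of_isMinOn [Finite κ] {c : V →ₗ[ℝ] ℝ} (hc : IsGenericCost L A c)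
    {x y : V} (hx : x ∈ polyhedron L A r lo hi) (hxmin : IsMinOn c (polyhedron L A r lo hi) x)
    (hy : y ∈ polyhedron L A r lo hi) (hymin : IsMinOn c (polyhedron L A r lo hi) y) :
    x = y := by
  have hcxy : c x = c y := le_antisymm (hxmin hy) (hymin hx)
  have hcmid : c (midpoint ℝ x y) = c x := by
    rw [midpoint_eq_smul_add, map_smul, map_add, ← hcxy, invOf_eq_inv, smul_eq_mul]
    ring
  have hmid : midpoint ℝ x y ∈ polyhedron L A r lo hi := convex_polyhedron.midpoint_mem hx hy
  have hmidmin : IsMinOn c (polyhedron L A r lo hi) (midpoint ℝ x y) :=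
    fun z hz => hcmid.trans_le (hxmin hz)
  have hvertex := hc _ (tightDirections_activeSet_le_ker hmid hmidmin)
  simpa [hvertex, sub_eq_zero] using sub_mem_tightDirections_activeSet_midpoint hx hy

theorem IsGenericCost.existsUnique_isMinOn [Finite κ] [TopologicalSpace V]
    [IsTopologicalAddGroup V] [ContinuousSMul ℝ V] [T2Space V] [FiniteDimensional ℝ V]
    {c : V →ₗ[ℝ] ℝ} (hc : IsGenericCost L A c) (hLA : Function.Injective (L.prod A))
    (hne : (polyhedron L A r lo hi).Nonempty) :
    ∃! x, x ∈ polyhedron L A r lo hi ∧ IsMinOn c (polyhedron L A r lo hi) x := by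
  obtain ⟨x, hx⟩ := (isCompact_polyhedron hLA).exists_isMinOn hne
    c.continuous_of_finiteDimensional.continuousOn
  exact ⟨x, hx, fun y hy => hc.eq_of_isMinOn hy.1 hy.2 hx.1 hx.2⟩

theorem dense_isGenericCost {E : Type*} [Finite κ] [NormedAddCommGroup E] [NormedSpace ℝ E]
    [FiniteDimensional ℝ E] {C : E →ₗ[ℝ] V →ₗ[ℝ] ℝ}
    (hC : ∀ d, L d = 0 → (∀ f, C f d = 0) → d = 0) : Dense {f | IsGenericCost L A (C f)} := by
  let ι := {S : Set κ // tightDirections L A S ≠ ⊥}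
  choose d hdtight hdne using fun S : ι => (Submodule.ne_bot_iff _).mp S.2
  let φ (S : ι) : StrongDual ℝ E := (C.flip (d S)).toContinuousLinearMap
  have hφ (S : ι) : φ S ≠ 0 := fun h =>
    hdne S (hC _ (mem_tightDirections.mp (hdtight S)).1 fun f => congr($h f))
  have := FiniteDimensional.complete ℝ E
  refine (dense_forall_apply_ne_zero hφ).mono fun f hf S hS => ?_
  by_contra hne
  exact hf ⟨S, hne⟩ (hS (hdtight ⟨S, hne⟩))

end LinearProgram

section OPF

variable {NG NL E : ℕ}

section Defs

variable (C : Matrix (Fin (NG + NL)) (Fin E) ℝ) (B : Matrix (Fin E) (Fin E) ℝ)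

/-- The generator injections determined by the angles `θ`: the first `N_G` entries of `M θ`. The
row index type `Fin (NG + NL + 1)` of `M` is read as `Fin (NG + (NL + 1))`. -/
def generation : (Fin (NG + NL) → ℝ) →ₗ[ℝ] Fin NG → ℝ :=
  LinearMap.funLeft ℝ ℝ (Fin.castAdd (NL + 1)) ∘ₗ (Mmat C B).mulVecLin

/-- The quantities prescribed by the equality constraints of the DC-OPF: the last `N_L + 1`
entries of `M θ`, which are the load injections followed by the reference angle. -/
def loadsAndReference : (Fin (NG + NL) → ℝ) →ₗ[ℝ] Fin (NL + 1) → ℝ :=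
  LinearMap.funLeft ℝ ℝ (Fin.natAdd NG) ∘ₗ (Mmat C B).mulVecLin

/-- The quantities subject to interval constraints in the DC-OPF: generator injections and line
flows. -/
def generationAndFlows : (Fin (NG + NL) → ℝ) →ₗ[ℝ] Fin NG ⊕ Fin E → ℝ :=
  (LinearEquiv.sumArrowLequivProdArrow (Fin NG) (Fin E) ℝ ℝ).symm ∘ₗ
    (generation C B).prod (B * Cᵀ).mulVecLin

/-- The set of angles `θ` that are feasible for the DC-OPF once `s^g` is eliminated. -/
def feasibleAngles (ξ : XiT NG E) (sl : Fin NL → ℝ) : Set (Fin (NG + NL) → ℝ) :=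
  LinearProgram.polyhedron (loadsAndReference C B) (generationAndFlows C B)
    (Fin.snoc (fun j => -(sl j)) 0) (Sum.elim ξ.2.1 ξ.2.2.2) (Sum.elim ξ.1 ξ.2.2.1)

/-- The generation cost as a function of the cost vector and the angles, linear in each. -/
def generationCost : (Fin NG → ℝ) →ₗ[ℝ] (Fin (NG + NL) → ℝ) →ₗ[ℝ] ℝ :=
  (dotProductBilin ℝ ℝ).compl₂ (generation C B)

/-- Cost vectors that are generic for the DC-OPF, seen as a linear program in the angles. -/
def IsGenericGenerationCost (f : Fin NG → ℝ) : Prop :=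
  LinearProgram.IsGenericCost (loadsAndReference C B) (generationAndFlows C B)
    (generationCost C B f)

end Defs

variable {C : Matrix (Fin (NG + NL)) (Fin E) ℝ} {B : Matrix (Fin E) (Fin E) ℝ}
  {f : Fin NG → ℝ} {ξ : XiT NG E} {sl : Fin NL → ℝ} {sg : Fin NG → ℝ} {θ : Fin (NG + NL) → ℝ}

theorem generationCost_apply : generationCost C B f θ = f ⬝ᵥ generation C B θ := rfl

theorem Mmat_mulVec_castSucc (k : Fin (NG + NL)) :
    (Mmat C B *ᵥ θ) k.castSucc = ((C * B * Cᵀ) *ᵥ θ) k := by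
  simp [Mmat, mulVec, dotProduct]

theorem Mmat_mulVec_last_eq_zero_iff :
    (Mmat C B *ᵥ θ) (Fin.last (NG + NL)) = 0 ↔ ∀ h : 0 < NG + NL, θ ⟨0, h⟩ = 0 := by
  rcases Nat.eq_zero_or_pos (NG + NL) with hN | hN
  · have : IsEmpty (Fin (NG + NL)) := by rw [hN]; infer_instance
    simp [mulVec, hN]
  · have hrow (j : Fin (NG + NL)) : (j : ℕ) = 0 ↔ j = ⟨0, hN⟩ := by simp [Fin.ext_iff]
    simp [Mmat, mulVec, dotProduct, hrow, hN]

theorem generation_apply (i : Fin NG) :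
    generation C B θ i = ((C * B * Cᵀ) *ᵥ θ) (Fin.castAdd NL i) :=
  Mmat_mulVec_castSucc (C := C) (B := B) (θ := θ) (Fin.castAdd NL i)

theorem loadsAndReference_castSucc (j : Fin NL) :
    loadsAndReference C B θ j.castSucc = ((C * B * Cᵀ) *ᵥ θ) (Fin.natAdd NG j) :=
  Mmat_mulVec_castSucc (C := C) (B := B) (θ := θ) (Fin.natAdd NG j)

theorem loadsAndReference_last_eq_zero_iff :
    loadsAndReference C B θ (Fin.last NL) = 0 ↔ ∀ h : 0 < NG + NL, θ ⟨0, h⟩ = 0 :=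
  Mmat_mulVec_last_eq_zero_iff

theorem generationAndFlows_apply :
    generationAndFlows C B θ = Sum.elim (generation C B θ) ((B * Cᵀ) *ᵥ θ) := rfl

theorem mem_feasibleAngles_iff :
    θ ∈ feasibleAngles C B ξ sl ↔ Feasible C B ξ sl (generation C B θ) θ := by
  have heq : loadsAndReference C B θ = Fin.snoc (fun j => -(sl j)) 0 ↔
      (∀ h : 0 < NG + NL, θ ⟨0, h⟩ = 0) ∧
        (C * B * Cᵀ) *ᵥ θ = Fin.append (generation C B θ) fun j => -(sl j) := by
    simp [funext_iff, Fin.forall_fin_succ', Fin.forall_fin_add, generation_apply,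
      loadsAndReference_castSucc, loadsAndReference_last_eq_zero_iff, and_comm]
  have hbox : generationAndFlows C B θ ∈
        Icc (Sum.elim ξ.2.1 ξ.2.2.2) (Sum.elim ξ.1 ξ.2.2.1) ↔
      (∀ i, ξ.2.1 i ≤ generation C B θ i ∧ generation C B θ i ≤ ξ.1 i) ∧
        ∀ e, ξ.2.2.2 e ≤ ((B * Cᵀ) *ᵥ θ) e ∧ ((B * Cᵀ) *ᵥ θ) e ≤ ξ.2.2.1 e := by
    simp [generationAndFlows_apply, Pi.le_def, forall_and, and_and_and_comm]
  exact (and_congr heq hbox).trans and_assoc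

theorem feasible_iff :
    Feasible C B ξ sl sg θ ↔ sg = generation C B θ ∧ θ ∈ feasibleAngles C B ξ sl := by
  refine ⟨fun h => ?_, fun ⟨hsg, hθ⟩ => hsg ▸ mem_feasibleAngles_iff.mp hθ⟩
  have hsg : sg = generation C B θ := by
    ext i
    rw [generation_apply, h.2.1, Fin.append_left]
  exact ⟨hsg, mem_feasibleAngles_iff.mpr (hsg ▸ h)⟩

theorem isOptimal_iff :
    IsOptimal C B f ξ sl sg θ ↔ sg = generation C B θ ∧ θ ∈ feasibleAngles C B ξ sl ∧
      IsMinOn (generationCost C B f) (feasibleAngles C B ξ sl) θ := by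
  simp only [IsOptimal, feasible_iff, and_assoc]
  refine and_congr_right fun hsg => and_congr_right fun _ => ?_
  simp only [hsg, isMinOn_iff, generationCost_apply]
  exact ⟨fun h θ' hθ' => h _ θ' ⟨rfl, hθ'⟩, fun h _ θ' ⟨hsg', hθ'⟩ => hsg' ▸ h θ' hθ'⟩

theorem eq_zero_of_loadsAndReference_of_generation (hM : Function.Injective (Mmat C B).mulVec)
    (hload : loadsAndReference C B θ = 0) (hgen : generation C B θ = 0) : θ = 0 := by
  refine hM (funext fun k => ?_)
  rw [mulVec_zero]
  exact Fin.addCases (m := NG) (n := NL + 1) (congrFun hgen) (congrFun hload) k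

theorem injective_loadsAndReference_prod_generationAndFlows
    (hM : Function.Injective (Mmat C B).mulVec) :
    Function.Injective ((loadsAndReference C B).prod (generationAndFlows C B)) := by
  refine (injective_iff_map_eq_zero _).mpr fun θ hθ => ?_
  obtain ⟨hload, hbox⟩ := Prod.mk_eq_zero.mp hθ
  exact eq_zero_of_loadsAndReference_of_generation hM hload
    (funext fun i => congrFun hbox (Sum.inl i))

theorem dense_isGenericGenerationCost (hM : Function.Injective (Mmat C B).mulVec) :
    Dense {f | IsGenericGenerationCost C B f} :=
  LinearProgram.dense_isGenericCost fun _ hload hcost =>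
    eq_zero_of_loadsAndReference_of_generation hM hload <|
      dotProduct_eq_zero_iff.mp fun f => (dotProduct_comm _ _).trans (hcost f)

theorem IsGenericGenerationCost.existsUnique_isOptimal (hM : Function.Injective (Mmat C B).mulVec)
    (hf : IsGenericGenerationCost C B f) (hfeas : ∃ sg θ, Feasible C B ξ sl sg θ) :
    ∃! p : (Fin NG → ℝ) × (Fin (NG + NL) → ℝ), IsOptimal C B f ξ sl p.1 p.2 := by
  obtain ⟨sg, θ₀, hθ₀⟩ := hfeas
  obtain ⟨θ, hθ, huniq⟩ := LinearProgram.IsGenericCost.existsUnique_isMinOn hf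
    (injective_loadsAndReference_prod_generationAndFlows hM) ⟨θ₀, (feasible_iff.mp hθ₀).2⟩
  refine ⟨(generation C B θ, θ), isOptimal_iff.mpr ⟨rfl, hθ⟩, fun ⟨sg', θ'⟩ hopt => ?_⟩
  obtain ⟨hsg', hθ'⟩ := isOptimal_iff.mp hopt
  exact Prod.ext (hsg'.trans congr(generation C B $(huniq θ' hθ'))) (huniq θ' hθ')

section KKT

variable {τ : Fin (NG + NL + 1) → ℝ} {μp μm : Fin E → ℝ} {lp lm : Fin NG → ℝ}

-- The `θ`-part of stationarity determines `τ ⬝ᵥ M d`; eliminating the first `N_G` entries of `τ`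
-- with the `s^g`-part turns it into an expression of the cost by the constraint functionals.
theorem IsKKT.generationCost_eq (hB : B.IsSymm) (h : IsKKT C B f ξ sl sg θ τ μp μm lp lm)
    (d : Fin (NG + NL) → ℝ) :
    generationCost C B f d =
      -((fun k => τ (Fin.natAdd NG k)) ⬝ᵥ loadsAndReference C B d) -
        (Sum.elim lp μp - Sum.elim lm μm) ⬝ᵥ generationAndFlows C B d := by
  obtain ⟨-, hθ, hsg, -⟩ := h
  have hf : f = (fun i => τ (Fin.castAdd (NL + 1) i)) - (lp - lm) := by
    ext i
    have : -f i = -τ (Fin.castAdd (NL + 1) i) + lp i - lm i := hsg i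
    simp only [Pi.sub_apply]
    linarith
  have hrows : τ ⬝ᵥ (Mmat C B *ᵥ d) =
      (fun i => τ (Fin.castAdd (NL + 1) i)) ⬝ᵥ generation C B d +
        (fun k => τ (Fin.natAdd NG k)) ⬝ᵥ loadsAndReference C B d :=
    Fin.sum_univ_add (a := NG) (b := NL + 1) fun k => τ k * (Mmat C B *ᵥ d) k
  have hstat : τ ⬝ᵥ (Mmat C B *ᵥ d) + (μp - μm) ⬝ᵥ ((B * Cᵀ) *ᵥ d) = 0 := by
    have hCB : C * B = (B * Cᵀ)ᵀ := by simp [hB.eq]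
    simpa only [hCB, mulVec_transpose, add_dotProduct, ← dotProduct_mulVec, zero_dotProduct]
      using congr($hθ ⬝ᵥ d)
  have hsub : Sum.elim lp μp - Sum.elim lm μm = Sum.elim (lp - lm) (μp - μm) := by
    ext (i | e) <;> rfl
  rw [generationCost_apply, hf, hsub, generationAndFlows_apply, sumElim_dotProduct_sumElim,
    sub_dotProduct]
  linarith

theorem IsKKT.tightDirections_le_ker (hB : B.IsSymm)
    (h : IsKKT C B f ξ sl sg θ τ μp μm lp lm) :
    LinearProgram.tightDirections (loadsAndReference C B) (generationAndFlows C B)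
        (Function.support (Sum.elim lp μp) ∪ Function.support (Sum.elim lm μm)) ≤
      LinearMap.ker (generationCost C B f) := by
  intro d hd
  obtain ⟨hload, hbox⟩ := LinearProgram.mem_tightDirections.mp hd
  have hslack :
      (Sum.elim lp μp - Sum.elim lm μm) ⬝ᵥ generationAndFlows C B d = 0 := by
    refine Finset.sum_eq_zero fun k _ => mul_eq_zero.mpr <| or_iff_not_imp_left.mpr fun hk => ?_
    exact hbox k (Function.support_sub _ _ hk)
  rw [LinearMap.mem_ker, h.generationCost_eq hB, hload, hslack, dotProduct_zero, neg_zero, sub_zero]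

end KKT

theorem IsGenericGenerationCost.le_nnz_of_isKKT (hB : B.IsSymm)
    (hf : IsGenericGenerationCost C B f) {τ : Fin (NG + NL + 1) → ℝ} {μp μm : Fin E → ℝ}
    {lp lm : Fin NG → ℝ} (h : IsKKT C B f ξ sl sg θ τ μp μm lp lm) :
    NG - 1 ≤ nnz μp + nnz μm + nnz lp + nnz lm := by
  have hdim := LinearProgram.finrank_le_of_tightDirections_eq_bot
    (hf _ (h.tightDirections_le_ker hB))
  have hsum {m n : ℕ} (u : Fin m → ℝ) (v : Fin n → ℝ) :
      (Function.support (Sum.elim u v)).ncard = nnz u + nnz v := ncard_support_sumElim u v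
  have hunion := Set.ncard_union_le (Function.support (Sum.elim lp μp))
    (Function.support (Sum.elim lm μm))
  rw [Module.finrank_fintype_fun_eq_card, Fintype.card_fin, Fintype.card_fin] at hdim
  rw [hsum, hsum] at hunion
  omega

end OPF

theorem PosDiag.posDef {E : ℕ} {B : Matrix (Fin E) (Fin E) ℝ} (hB : PosDiag B) : B.PosDef := by
  rw [← IsDiag.diagonal_diag fun e e' h => hB.2 e e' h]
  exact posDef_diagonal_iff.mpr hB.1

-- `θᵀ C B Cᵀ θ` is the positive definite form `B` at `Cᵀ θ`, so `C B Cᵀ θ = 0` forces `Cᵀ θ = 0`: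
-- `θ` is constant, and the reference angle makes it zero.
theorem ConnectedIncidence.injective_Mmat_mulVec {NG NL E : ℕ}
    {C : Matrix (Fin (NG + NL)) (Fin E) ℝ} {B : Matrix (Fin E) (Fin E) ℝ}
    (hC : ConnectedIncidence C) (hB : B.PosDef) : Function.Injective (Mmat C B).mulVec := by
  refine (injective_iff_map_eq_zero (Mmat C B).mulVecLin).mpr fun θ hθ => ?_
  have hlap : (C * B * Cᵀ) *ᵥ θ = 0 := by
    ext k
    exact (Mmat_mulVec_castSucc k).symm.trans (congrFun hθ k.castSucc)
  have href := Mmat_mulVec_last_eq_zero_iff.mp (congrFun hθ (Fin.last _))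
  have hform : (Cᵀ *ᵥ θ) ⬝ᵥ (B *ᵥ (Cᵀ *ᵥ θ)) = 0 := by
    nth_rw 1 [mulVec_transpose]
    rw [← dotProduct_mulVec, mulVec_mulVec, mulVec_mulVec, hlap,
      dotProduct_zero]
  have hflow : Cᵀ *ᵥ θ = 0 := by
    by_contra hne
    exact (hB.dotProduct_mulVec_pos hne).ne' hform
  obtain ⟨c, rfl⟩ := (hC θ).mp hflow
  ext k
  exact href k.pos

theorem omegaF_dense_general {NG NL E : ℕ} (C : Matrix (Fin (NG + NL)) (Fin E) ℝ)
    (B : Matrix (Fin E) (Fin E) ℝ) (hB : B.IsSymm) (hM : Function.Injective (Mmat C B).mulVec) :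
    ∀ f : Fin NG → ℝ, (∀ i, 0 ≤ f i) → f ∈ closure (OmegaF C B) := by
  intro f hf
  have hgeneric : f ∈ closure (Ici 0 ∩ {g | IsGenericGenerationCost C B g}) :=
    subset_closure_inter_of_dense Ici_zero_subset_closure_interior
      (dense_isGenericGenerationCost hM) hf
  refine closure_mono ?_ hgeneric
  rintro g ⟨hg, hgen⟩
  exact ⟨hg, fun ξ _ sl hsl =>
    ⟨hgen.existsUnique_isOptimal hM hsl.2, fun _ _ _ _ _ _ _ h => hgen.le_nnz_of_isKKT hB h⟩⟩

theorem omegaF_dense {NG NL E : ℕ} (hNG : 0 < NG) (hNL : 0 < NL) (hE : 0 < E)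
    (C : Matrix (Fin (NG + NL)) (Fin E) ℝ) (B : Matrix (Fin E) (Fin E) ℝ)
    (hInc : IsIncidence C) (hConn : ConnectedIncidence C) (hB : PosDiag B) :
    ∀ f : Fin NG → ℝ, (∀ i, 0 ≤ f i) → f ∈ closure (OmegaF C B) :=
  omegaF_dense_general C B (isHermitian_iff_isSymm.mp hB.posDef.isHermitian)
    (hConn.injective_Mmat_mulVec hB.posDef)

end
end

section
/- For every f ∈ Ω_f there exists a subset D ⊆ Ω_ξ, dense in Ω_ξ, such that for every ξ ∈ D and every s^l ∈ ~Ω_sl(ξ, f), the N_G − 1 binding inequality constraints at the unique optimal solution are independent of the equality constraints: the gradient vectors of the N+1 equality constraints together with the gradient vectors of the N_G − 1 binding inequality constraints are linearly independent in ℝ^{N_G+N}. -/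
open Matrix

noncomputable section

/-!
A unique optimal solution of a linear program is an exposed point of the feasible polyhedron, hence
an extreme point. At an extreme point of a polyhedron, the gradients of the equality constraints
and of the binding inequality constraints are not all orthogonal to a nonzero direction `v`:
otherwise one could move from the point along both `v` and `-v`. These gradients therefore span the
space, and `(N + 1) + (N_G - 1)` vectors spanning dimension `N_G + N` form a basis. The argument
applies at every `ξ`, so the dense set can be taken to be all of `Ω_ξ`.
-/

section Polyhedron

variable {ι κ V : Type*} [AddCommGroup V] [Module ℝ V]

/-- The polyhedron cut out by the equations `a k x = α k` and the inequalities `b i x ≤ β i`. -/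
def polyhedron (a : κ → Module.Dual ℝ V) (α : κ → ℝ) (b : ι → Module.Dual ℝ V) (β : ι → ℝ) :
    Set V :=
  {x | (∀ k, a k x = α k) ∧ ∀ i, b i x ≤ β i}

variable {a : κ → Module.Dual ℝ V} {α : κ → ℝ} {b : ι → Module.Dual ℝ V} {β : ι → ℝ} {x v : V}

lemma eventually_add_smul_mem_polyhedron [Finite ι] (hx : x ∈ polyhedron a α b β)
    (ha : ∀ k, a k v = 0) (hb : ∀ i, b i x = β i → b i v = 0) :
    ∀ᶠ t : ℝ in nhds 0, x + t • v ∈ polyhedron a α b β := by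
  have hineq (i : ι) : ∀ᶠ t : ℝ in nhds 0, b i (x + t • v) ≤ β i := by
    simp only [map_add, map_smul, smul_eq_mul]
    rcases (hx.2 i).eq_or_lt with hactive | hslack
    · simp [hb i hactive, hactive]
    · have hcont : Continuous fun t : ℝ => b i x + t * b i v := by fun_prop
      exact (hcont.continuousAt.eventually_lt_const (by simpa using hslack)).mono
        fun _ => le_of_lt
  filter_upwards [Filter.eventually_all.2 hineq] with t ht
  exact ⟨fun k => by simp [ha k, hx.1 k], ht⟩

lemma eq_zero_of_mem_extremePoints_polyhedron [Finite ι]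
    (hx : x ∈ (polyhedron a α b β).extremePoints ℝ)
    (ha : ∀ k, a k v = 0) (hb : ∀ i, b i x = β i → b i v = 0) : v = 0 := by
  have hadd_ev := eventually_add_smul_mem_polyhedron hx.1 ha hb
  have hsub_ev := eventually_add_smul_mem_polyhedron (v := -v) hx.1 (by simpa using ha)
    (by simpa using hb)
  obtain ⟨t, ⟨hadd, hsub⟩, ht⟩ :=
    (((hadd_ev.and hsub_ev).filter_mono nhdsWithin_le_nhds).and
      (eventually_mem_nhdsWithin (s := {0}ᶜ))).exists
  rw [smul_neg, ← sub_eq_add_neg] at hsub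
  have htv : x + t • v = x := hx.2 hadd hsub (mem_openSegment_add_sub x (t • v))
  exact (smul_eq_zero.1 (add_eq_left.1 htv)).resolve_left ht

lemma span_eq_top_of_mem_extremePoints_polyhedron [Finite ι] [Finite κ]
    (hx : x ∈ (polyhedron a α b β).extremePoints ℝ) {s : Set ι} (hs : ∀ i, b i x = β i → i ∈ s) :
    Submodule.span ℝ (Set.range (Sum.elim a fun i : s => b i)) = ⊤ := by
  refine eq_top_iff.2 fun φ _ => mem_span_of_iInf_ker_le_ker fun v hv => ?_
  have hv' : ∀ j, Sum.elim a (fun i : s => b i) j v = 0 := by simpa using hv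
  have hzero : v = 0 := eq_zero_of_mem_extremePoints_polyhedron hx (fun k => hv' (.inl k))
    fun i hi => hv' (.inr ⟨i, hs i hi⟩)
  simp [hzero]

lemma linearIndependent_of_mem_extremePoints_polyhedron [Finite ι] [Finite κ]
    (hx : x ∈ (polyhedron a α b β).extremePoints ℝ) {s : Set ι} (hs : ∀ i, b i x = β i → i ∈ s)
    (hcard : Nat.card κ + s.ncard ≤ Module.finrank ℝ V) :
    LinearIndependent ℝ (Sum.elim a fun i : s => b i) := by
  have := Fintype.ofFinite (κ ⊕ s)
  refine linearIndependent_of_top_le_span_of_card_le_finrank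
    (span_eq_top_of_mem_extremePoints_polyhedron hx hs).ge ?_
  rwa [Subspace.dual_finrank_eq, ← Nat.card_eq_fintype_card, Nat.card_sum, Nat.card_coe_set_eq]

end Polyhedron

lemma ncard_eq_ncard_preimage_inl_add_ncard_preimage_inr {α β : Type*} (s : Set (α ⊕ β))
    [Finite s] : s.ncard = (Sum.inl ⁻¹' s).ncard + (Sum.inr ⁻¹' s).ncard := by
  have : Finite (Sum.inl ⁻¹' s) := (s.toFinite.preimage Sum.inl_injective.injOn).to_subtype
  have : Finite (Sum.inr ⁻¹' s) := (s.toFinite.preimage Sum.inr_injective.injOn).to_subtype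
  simp only [← Nat.card_coe_set_eq, ← Nat.card_sum]
  exact Nat.card_congr Equiv.subtypeSum

/-- The identification of a gradient vector with the linear functional it represents. -/
def gradDual (m n : Type*) [Fintype m] [Fintype n] [DecidableEq m] [DecidableEq n] :
    ((m → ℝ) × (n → ℝ)) ≃ₗ[ℝ] Module.Dual ℝ ((m → ℝ) × (n → ℝ)) :=
  ((dotProductEquiv ℝ m).prodCongr (dotProductEquiv ℝ n)).trans (LinearMap.coprodEquiv ℝ)

lemma gradDual_apply {m n : Type*} [Fintype m] [Fintype n] [DecidableEq m] [DecidableEq n]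
    (p q : (m → ℝ) × (n → ℝ)) : gradDual m n p q = p.1 ⬝ᵥ q.1 + p.2 ⬝ᵥ q.2 :=
  rfl

section OPF

variable {NG NL E : ℕ} (C : Matrix (Fin (NG + NL)) (Fin E) ℝ) (B : Matrix (Fin E) (Fin E) ℝ)
  (ξ : XiT NG E) (sl : Fin NL → ℝ) (sg : Fin NG → ℝ) (θ : Fin (NG + NL) → ℝ)

lemma gradDual_eqGrad_inl_eq_zero_iff (u : Unit) :
    gradDual _ _ (eqGrad C B (.inl u)) (sg, θ) = 0 ↔ ∀ h : 0 < NG + NL, θ ⟨0, h⟩ = 0 := by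
  simp only [gradDual_apply, eqGrad, zero_dotProduct, zero_add]
  rcases Nat.eq_zero_or_pos (NG + NL) with h | h
  · have : IsEmpty (Fin (NG + NL)) := by rw [h]; infer_instance
    simp [h]
  · have h0 : (fun j : Fin (NG + NL) => if (j : ℕ) = 0 then (1 : ℝ) else 0)
        = Pi.single ⟨0, h⟩ 1 := by
      ext j
      simp [Pi.single_apply, Fin.ext_iff]
    simp [h0, h]

lemma gradDual_eqGrad_castAdd (i : Fin NG) :
    gradDual _ _ (eqGrad C B (.inr (Fin.castAdd NL i))) (sg, θ)
      = ((C * B * Cᵀ) *ᵥ θ) (Fin.castAdd NL i) - sg i := by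
  have h : (fun k : Fin NG => if (k : ℕ) = (Fin.castAdd NL i : ℕ) then (-1 : ℝ) else 0)
      = Pi.single i (-1) := by
    ext k
    simp [Pi.single_apply, Fin.ext_iff]
  rw [gradDual_apply, eqGrad, h, single_dotProduct, neg_one_mul, neg_add_eq_sub]
  rfl

lemma gradDual_eqGrad_natAdd (j : Fin NL) :
    gradDual _ _ (eqGrad C B (.inr (Fin.natAdd NG j))) (sg, θ)
      = ((C * B * Cᵀ) *ᵥ θ) (Fin.natAdd NG j) := by
  have h : (fun k : Fin NG => if (k : ℕ) = (Fin.natAdd NG j : ℕ) then (-1 : ℝ) else 0) = 0 := by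
    ext k
    simp [show (k : ℕ) ≠ NG + j by omega]
  rw [gradDual_apply, eqGrad, h, zero_dotProduct, zero_add]
  rfl

/-- The right-hand sides of the equality constraints, with all of `sg` moved to the left. -/
def eqBound : Unit ⊕ Fin (NG + NL) → ℝ :=
  Sum.elim 0 (Fin.append 0 (-sl))

/-- The right-hand sides of the inequality constraints, all written with `≤`: a lower bound is
encoded as an upper bound on the negated quantity, matching the signs in `ineqGrad`. -/
def ineqBound : Fin NG ⊕ Fin NG ⊕ Fin E ⊕ Fin E → ℝ :=
  Sum.elim ξ.1 (Sum.elim (-ξ.2.1) (Sum.elim ξ.2.2.1 (-ξ.2.2.2)))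

lemma gradDual_ineqGrad (c : Fin NG ⊕ Fin NG ⊕ Fin E ⊕ Fin E) :
    gradDual _ _ (ineqGrad C B c) (sg, θ)
      = Sum.elim sg (Sum.elim (-sg) (Sum.elim ((B * Cᵀ) *ᵥ θ) (-((B * Cᵀ) *ᵥ θ)))) c := by
  rcases c with i | i | e | e
  · simp [gradDual_apply, ineqGrad]
  · simp [gradDual_apply, ineqGrad]
  · simp [gradDual_apply, ineqGrad, mulVec]
  · simp only [gradDual_apply, ineqGrad, zero_dotProduct, zero_add]
    exact neg_dotProduct ((B * Cᵀ) e) θ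

lemma forall_gradDual_eqGrad_iff :
    (∀ k, gradDual _ _ (eqGrad C B k) (sg, θ) = eqBound sl k) ↔
      (∀ h : 0 < NG + NL, θ ⟨0, h⟩ = 0) ∧
        (C * B * Cᵀ) *ᵥ θ = Fin.append sg (fun j => -(sl j)) := by
  simp only [Sum.forall, forall_const, eqBound, Sum.elim_inl, Sum.elim_inr, Pi.zero_apply,
    gradDual_eqGrad_inl_eq_zero_iff, funext_iff, Fin.forall_fin_add, gradDual_eqGrad_castAdd,
    gradDual_eqGrad_natAdd, Fin.append_left, Fin.append_right, sub_eq_zero, Pi.neg_apply]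

lemma forall_gradDual_ineqGrad_le_iff :
    (∀ c, gradDual _ _ (ineqGrad C B c) (sg, θ) ≤ ineqBound ξ c) ↔
      (∀ i, ξ.2.1 i ≤ sg i ∧ sg i ≤ ξ.1 i) ∧
        ∀ e, ξ.2.2.2 e ≤ ((B * Cᵀ) *ᵥ θ) e ∧ ((B * Cᵀ) *ᵥ θ) e ≤ ξ.2.2.1 e := by
  simp only [gradDual_ineqGrad, ineqBound, Sum.forall, Sum.elim_inl, Sum.elim_inr, Pi.neg_apply,
    neg_le_neg_iff, forall_and]
  tauto

/-- The feasible region of the DC-OPF, as a polyhedron in the joint space of `(sg, θ)`. -/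
def feasibleSet : Set ((Fin NG → ℝ) × (Fin (NG + NL) → ℝ)) :=
  polyhedron (fun k => gradDual _ _ (eqGrad C B k)) (eqBound sl)
    (fun c => gradDual _ _ (ineqGrad C B c)) (ineqBound ξ)

lemma mem_feasibleSet_iff : (sg, θ) ∈ feasibleSet C B ξ sl ↔ Feasible C B ξ sl sg θ :=
  (and_congr (forall_gradDual_eqGrad_iff ..) (forall_gradDual_ineqGrad_le_iff ..)).trans and_assoc

lemma mem_bindingIdx_iff (c : Fin NG ⊕ Fin NG ⊕ Fin E ⊕ Fin E) :
    c ∈ BindingIdx C B ξ sg θ ↔ gradDual _ _ (ineqGrad C B c) (sg, θ) = ineqBound ξ c := by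
  rw [gradDual_ineqGrad]
  rcases c with i | i | e | e <;> simp [BindingIdx, ineqBound]

lemma ncard_bindingIdx : (BindingIdx C B ξ sg θ).ncard = bindingCount C B ξ sg θ := by
  simp only [ncard_eq_ncard_preimage_inl_add_ncard_preimage_inr, ← add_assoc]
  rfl

lemma gradDual_comp_fullGrad :
    gradDual _ _ ∘ fullGrad C B ξ sg θ = Sum.elim (fun k => gradDual _ _ (eqGrad C B k))
      fun c : BindingIdx C B ξ sg θ => gradDual _ _ (ineqGrad C B c) := by
  ext1 (k | c) <;> rfl

variable {C B ξ sl sg θ}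

lemma mem_extremePoints_feasibleSet_of_isOptimal {f : Fin NG → ℝ} (hopt : IsOptimal C B f ξ sl sg θ)
    (huniq : ∀ p : (Fin NG → ℝ) × (Fin (NG + NL) → ℝ),
      IsOptimal C B f ξ sl p.1 p.2 → p = (sg, θ)) :
    (sg, θ) ∈ (feasibleSet C B ξ sl).extremePoints ℝ := by
  obtain ⟨hfeas, hmin⟩ := hopt
  refine exposedPoints_subset_extremePoints ⟨(mem_feasibleSet_iff ..).2 hfeas,
    -LinearMap.toContinuousLinearMap (gradDual _ _ (f, 0)), fun p hp => ?_⟩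
  have hp' : Feasible C B ξ sl p.1 p.2 := (mem_feasibleSet_iff ..).1 hp
  simp only [_root_.neg_apply, LinearMap.coe_toContinuousLinearMap', gradDual_apply,
    zero_dotProduct, add_zero, neg_le_neg_iff]
  exact ⟨hmin _ _ hp', fun hle => huniq p ⟨hp', fun sg' θ' h => hle.trans (hmin sg' θ' h)⟩⟩

theorem binding_constraints_independent_general {f : Fin NG → ℝ} (hopt : IsOptimal C B f ξ sl sg θ)
    (huniq : ∀ p : (Fin NG → ℝ) × (Fin (NG + NL) → ℝ),
      IsOptimal C B f ξ sl p.1 p.2 → p = (sg, θ))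
    (hcount : bindingCount C B ξ sg θ < NG) :
    LinearIndependent ℝ (fullGrad C B ξ sg θ) := by
  refine LinearIndependent.of_comp (gradDual _ _).toLinearMap ?_
  have hcard : Nat.card (Unit ⊕ Fin (NG + NL)) + (BindingIdx C B ξ sg θ).ncard
      ≤ Module.finrank ℝ ((Fin NG → ℝ) × (Fin (NG + NL) → ℝ)) := by
    simp only [Nat.card_sum, Nat.card_unique, Nat.card_fin, ncard_bindingIdx,
      Module.finrank_prod, Module.finrank_fin_fun]
    omega
  simpa only [LinearEquiv.coe_coe, gradDual_comp_fullGrad] using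
    linearIndependent_of_mem_extremePoints_polyhedron
      (mem_extremePoints_feasibleSet_of_isOptimal hopt huniq)
      (fun _ => (mem_bindingIdx_iff ..).2) hcard

end OPF

theorem binding_constraints_independent {NG NL E : ℕ} (hNG : 0 < NG) (hNL : 0 < NL) (hE : 0 < E)
    (C : Matrix (Fin (NG + NL)) (Fin E) ℝ) (B : Matrix (Fin E) (Fin E) ℝ)
    (hInc : IsIncidence C) (hConn : ConnectedIncidence C) (hB : PosDiag B) :
    ∀ f ∈ OmegaF C B, ∃ D ⊆ OmegaXi C B, OmegaXi C B ⊆ closure D ∧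
      ∀ ξ ∈ D, ∀ sl ∈ TOmegaSl C B f ξ, ∀ sg θ, IsOptimal C B f ξ sl sg θ →
        LinearIndependent ℝ (fullGrad C B ξ sg θ) := by
  refine fun f hf => ⟨OmegaXi C B, subset_rfl, subset_closure, fun ξ hξ sl hsl sg θ hopt => ?_⟩
  have hcount : bindingCount C B ξ sg θ = NG - 1 := hsl.2 sg θ hopt
  exact binding_constraints_independent_general hopt
    (fun _ hp => (hf.2 ξ hξ sl hsl.1).1.unique hp hopt) (by omega)

end
end
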